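/- arXiv:2206.10389 — 2 statements merged into one kernel-verified Lean document; each statement's English description precedes it below -/
import Mathlib

section
/- Let φ be an exact 2CNF Boolean formula in a clean shape with distinct variables x₁,…,xₙ and clauses C₁,…,C_m, in which every variable occurs at most 3 times and no literal is removable. Then φ is satisfiable if and only if there exists a subcollection D' ⊆ D that is an exact cover for X exempt from R, where X, R and D are as defined in the construction below. -/
/-- The abstract elements used in the reduction from 2SAT₃ to 3XCE₂:
`lit i b j` is the element `z[j]` for the literal `z` with variable `x_i` and polarity `b`
occurring in clause `C_j`; `s j` is the element `s_j`; `t i false` is `t_i[1]` and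
`t i true` is `t_i[2]`. -/
inductive XCElem (n m : ℕ) where
  | lit : Fin n → Bool → Fin m → XCElem n m
  | s : Fin m → XCElem n m
  | t : Fin n → Bool → XCElem n m

/-- The three classes of variables: `plus` is `V⁺`, `minus` is `V⁻`, `star` is `V*`. -/
inductive XCClass where
  | plus | minus | star

/-- The literal `(i, b)` occurs in clause `j` of the formula whose clause `j` consists of
the two literals `ltr j false` and `ltr j true`. -/
def OccursIn {n m : ℕ} (ltr : Fin m → Bool → Fin n × Bool)
    (i : Fin n) (b : Bool) (j : Fin m) : Prop :=
  ∃ p, ltr j p = (i, b)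

/-- The universe `X = X₁ ∪ X₂ ∪ X₃` of the construction. -/
def coverX {n m : ℕ} (ltr : Fin m → Bool → Fin n × Bool) (cls : Fin n → XCClass) :
    Set (XCElem n m) :=
  {e | ∃ i b j, OccursIn ltr i b j ∧ e = XCElem.lit i b j} ∪
  {e | ∃ j, e = XCElem.s j} ∪
  {e | ∃ i, e = XCElem.t i false} ∪
  {e | ∃ i, cls i ≠ XCClass.star ∧ e = XCElem.t i true}

/-- The exemption set `R = X₁`. -/
def coverR {n m : ℕ} (ltr : Fin m → Bool → Fin n × Bool) : Set (XCElem n m) :=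
  {e | ∃ i b j, OccursIn ltr i b j ∧ e = XCElem.lit i b j}

/-- The collection `D` of subsets of `X` of the construction. -/
def coverD {n m : ℕ} (ltr : Fin m → Bool → Fin n × Bool) (cls : Fin n → XCClass)
    (j₁ j₂ j₃ : Fin n → Fin m) : Set (Set (XCElem n m)) :=
  {S | ∃ i b j, OccursIn ltr i b j ∧ S = {XCElem.lit i b j, XCElem.s j}} ∪
  {S | ∃ i, cls i = XCClass.plus ∧
      (S = {XCElem.lit i true (j₁ i), XCElem.t i false} ∨
       S = {XCElem.lit i true (j₂ i), XCElem.t i true} ∨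
       S = {XCElem.lit i false (j₃ i), XCElem.t i false, XCElem.t i true})} ∪
  {S | ∃ i, cls i = XCClass.minus ∧
      (S = {XCElem.lit i false (j₁ i), XCElem.t i false} ∨
       S = {XCElem.lit i false (j₂ i), XCElem.t i true} ∨
       S = {XCElem.lit i true (j₃ i), XCElem.t i false, XCElem.t i true})} ∪
  {S | ∃ i, cls i = XCClass.star ∧
      (S = {XCElem.lit i true (j₁ i), XCElem.t i false} ∨
       S = {XCElem.lit i false (j₂ i), XCElem.t i false})}

/-!
Selecting the set that joins a literal occurrence `z[j]` to elements `t i c` declares `z` false.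
Every `t i c` has to be covered, so each slot of `x_i` declares one polarity of `x_i` false, and the
two slots agree because some polarity has a single occurrence, whose set contains all the slots.
The occurrences of false literals are thereby used up, and `s j` can still be covered if and only if
clause `j` contains a true literal.
-/

/-- A collection `D` covers every element of `X \ R` exactly once and every element of `R` at most
once: an exact cover for `X` exempt from `R`. -/
def IsExactCoverExempt {α : Type*} (X R : Set α) (D : Set (Set α)) : Prop :=
  (∀ e ∈ X, e ∉ R → ∃! S, S ∈ D ∧ e ∈ S) ∧
  (∀ e ∈ R, ∀ S₁ ∈ D, ∀ S₂ ∈ D, e ∈ S₁ → e ∈ S₂ → S₁ = S₂)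

/-- The set `{z[j], s_j}` of the construction, for the literal `z` of variable `i` and
polarity `b`. -/
def clauseSet {n m : ℕ} (i : Fin n) (b : Bool) (j : Fin m) : Set (XCElem n m) :=
  {XCElem.lit i b j, XCElem.s j}

section ClauseSet

variable {n m : ℕ} {i i' : Fin n} {b b' c : Bool} {j j' : Fin m}

lemma lit_mem_clauseSet :
    XCElem.lit i b j ∈ clauseSet i' b' j' ↔ i = i' ∧ b = b' ∧ j = j' := by
  simp [clauseSet]

lemma s_mem_clauseSet : XCElem.s j ∈ clauseSet i b j' ↔ j = j' := by
  simp [clauseSet]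

lemma t_notMem_clauseSet : XCElem.t i c ∉ clauseSet i' b j := by
  simp [clauseSet]

end ClauseSet

/-- A CNF formula with clauses of any length, given by its variable gadgets. The slots of the
variable `i` are the `c` for which the element `t i c` is present. For each polarity `b`, the slots
are distributed over the occurrences of the literal `(i, b)`: slot `c` goes to the occurrence in
clause `clause i b c`. Some polarity occurs in at most one clause, which then receives all slots. -/
structure VariableGadgets (n m : ℕ) where
  slots : Fin n → Set Bool
  clause : Fin n → Bool → Bool → Fin m
  exists_polarity_clause_eq :
    ∀ i, ∃ b, ∀ c ∈ slots i, ∀ c' ∈ slots i, clause i b c = clause i b c'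

namespace VariableGadgets

variable {n m : ℕ} (G : VariableGadgets n m)

/-- The literal with variable `i` and polarity `b` occurs in clause `j` of the formula given
by `G`. -/
def Occurs (i : Fin n) (b : Bool) (j : Fin m) : Prop :=
  ∃ c ∈ G.slots i, G.clause i b c = j

/-- The set consisting of the literal occurrence `z[j]`, where `z` has variable `i` and
polarity `b`, and the elements `t i c` for the slots `c` that `z` has in clause `j`. -/
def slotSet (i : Fin n) (b : Bool) (j : Fin m) : Set (XCElem n m) :=
  insert (XCElem.lit i b j) (XCElem.t i '' {c ∈ G.slots i | G.clause i b c = j})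

/-- The sets of the gadget of variable `i`, one for each occurrence of `i`. -/
def slotSets (i : Fin n) : Set (Set (XCElem n m)) :=
  {S | ∃ b, ∃ c ∈ G.slots i, S = G.slotSet i b (G.clause i b c)}

/-- The exemption set: the literal occurrences of the formula given by `G`. -/
def exempt : Set (XCElem n m) :=
  {e | ∃ i b j, G.Occurs i b j ∧ e = XCElem.lit i b j}

/-- The universe of the covering instance for the formula given by `G`. -/
def elements : Set (XCElem n m) :=
  G.exempt ∪ Set.range XCElem.s ∪ {e | ∃ i, ∃ c ∈ G.slots i, e = XCElem.t i c}

/-- The sets available for covering in the instance for the formula given by `G`. -/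
def sets : Set (Set (XCElem n m)) :=
  {S | ∃ i b j, G.Occurs i b j ∧ S = clauseSet i b j} ∪
  {S | ∃ i, S ∈ G.slotSets i}

variable {G} {i i' : Fin n} {b b' c : Bool} {j j' : Fin m}

lemma lit_mem_slotSet :
    XCElem.lit i b j ∈ G.slotSet i' b' j' ↔ i = i' ∧ b = b' ∧ j = j' := by
  simp [slotSet]

lemma s_notMem_slotSet : XCElem.s j ∉ G.slotSet i b j' := by
  simp [slotSet]

lemma t_mem_slotSet :
    XCElem.t i c ∈ G.slotSet i' b j ↔ i' = i ∧ c ∈ G.slots i ∧ G.clause i b c = j := by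
  simp only [slotSet, Set.mem_insert_iff, reduceCtorEq, Set.mem_image, Set.mem_ofPred_eq,
    XCElem.t.injEq, false_or]
  constructor
  · rintro ⟨c, hc, rfl, rfl⟩
    exact ⟨rfl, hc⟩
  · rintro ⟨rfl, hc⟩
    exact ⟨c, hc, rfl, rfl⟩

lemma clauseSet_ne_slotSet : clauseSet i b j ≠ G.slotSet i' b' j' := fun h =>
  s_notMem_slotSet (h ▸ s_mem_clauseSet.2 rfl : XCElem.s j ∈ G.slotSet i' b' j')

lemma s_notMem_exempt : XCElem.s j ∉ G.exempt := by
  simp [exempt]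

lemma t_notMem_exempt : XCElem.t i c ∉ G.exempt := by
  simp [exempt]

lemma s_mem_elements : XCElem.s j ∈ G.elements :=
  .inl (.inr ⟨j, rfl⟩)

lemma t_mem_elements (hc : c ∈ G.slots i) : XCElem.t i c ∈ G.elements :=
  .inr ⟨i, c, hc, rfl⟩

section CoverOfAssignment

variable (G) in
/-- The cover induced by an assignment `σ` and a choice, for every clause `j`, of a variable `w j`
whose literal in clause `j` is true: the true literal covers `s j`, and the false literals cover
the slots. -/
def inducedCover (σ : Fin n → Bool) (w : Fin m → Fin n) : Set (Set (XCElem n m)) :=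
  {S | ∃ j, S = clauseSet (w j) (σ (w j)) j} ∪
  {S | ∃ i, ∃ c ∈ G.slots i, S = G.slotSet i (!σ i) (G.clause i (!σ i) c)}

variable {σ : Fin n → Bool} {w : Fin m → Fin n}

lemma inducedCover_subset_sets (hw : ∀ j, G.Occurs (w j) (σ (w j)) j) :
    G.inducedCover σ w ⊆ G.sets := by
  rintro S (⟨j, rfl⟩ | ⟨i, c, hc, rfl⟩)
  · exact .inl ⟨_, _, j, hw j, rfl⟩
  · exact .inr ⟨i, _, c, hc, rfl⟩

lemma existsUnique_s_mem_inducedCover (j : Fin m) :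
    ∃! S, S ∈ G.inducedCover σ w ∧ XCElem.s j ∈ S := by
  refine ⟨_, ⟨.inl ⟨j, rfl⟩, s_mem_clauseSet.2 rfl⟩, ?_⟩
  rintro S ⟨⟨j', rfl⟩ | ⟨i, c, -, rfl⟩, hS⟩
  · rw [s_mem_clauseSet.1 hS]
  · exact absurd hS s_notMem_slotSet

lemma existsUnique_t_mem_inducedCover (hc : c ∈ G.slots i) :
    ∃! S, S ∈ G.inducedCover σ w ∧ XCElem.t i c ∈ S := by
  refine ⟨_, ⟨.inr ⟨i, c, hc, rfl⟩, t_mem_slotSet.2 ⟨rfl, hc, rfl⟩⟩, ?_⟩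
  rintro S ⟨⟨j, rfl⟩ | ⟨i', c', -, rfl⟩, hS⟩
  · exact absurd hS t_notMem_clauseSet
  · obtain ⟨rfl, -, hclause⟩ := t_mem_slotSet.1 hS
    rw [hclause]

lemma eq_ite_of_lit_mem_inducedCover {S : Set (XCElem n m)} (hS : S ∈ G.inducedCover σ w)
    (hlit : XCElem.lit i b j ∈ S) :
    S = if σ i = b then clauseSet i b j else G.slotSet i b j := by
  obtain ⟨j', rfl⟩ | ⟨i', c, -, rfl⟩ := hS
  · obtain ⟨rfl, rfl, rfl⟩ := lit_mem_clauseSet.1 hlit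
    exact (if_pos rfl).symm
  · obtain ⟨rfl, rfl, rfl⟩ := lit_mem_slotSet.1 hlit
    exact (if_neg (Bool.self_ne_not _)).symm

lemma isExactCoverExempt_inducedCover :
    IsExactCoverExempt G.elements G.exempt (G.inducedCover σ w) := by
  constructor
  · rintro e ((he | ⟨j, rfl⟩) | ⟨i, c, hc, rfl⟩) hR
    · exact absurd he hR
    · exact existsUnique_s_mem_inducedCover j
    · exact existsUnique_t_mem_inducedCover hc
  · rintro _ ⟨i, b, j, -, rfl⟩ S₁ hS₁ S₂ hS₂ hlit₁ hlit₂
    rw [eq_ite_of_lit_mem_inducedCover hS₁ hlit₁, eq_ite_of_lit_mem_inducedCover hS₂ hlit₂]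

end CoverOfAssignment

section AssignmentOfCover

variable {D : Set (Set (XCElem n m))}

lemma exists_clauseSet_mem (hD : D ⊆ G.sets) (hcover : IsExactCoverExempt G.elements G.exempt D)
    (j : Fin m) : ∃ i b, G.Occurs i b j ∧ clauseSet i b j ∈ D := by
  obtain ⟨S, ⟨hS, hj⟩, -⟩ := hcover.1 _ (s_mem_elements (j := j)) s_notMem_exempt
  obtain ⟨i, b, j', hocc, rfl⟩ | ⟨i, b, c, -, rfl⟩ := hD hS
  · obtain rfl := s_mem_clauseSet.1 hj
    exact ⟨i, b, hocc, hS⟩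
  · exact absurd hj s_notMem_slotSet

lemma exists_slotSet_mem (hD : D ⊆ G.sets) (hcover : IsExactCoverExempt G.elements G.exempt D)
    (hc : c ∈ G.slots i) : ∃ b, G.slotSet i b (G.clause i b c) ∈ D := by
  obtain ⟨S, ⟨hS, ht⟩, -⟩ := hcover.1 _ (t_mem_elements hc) t_notMem_exempt
  obtain ⟨i', b, j, -, rfl⟩ | ⟨i', b, c', -, rfl⟩ := hD hS
  · exact absurd ht t_notMem_clauseSet
  · obtain ⟨rfl, -, hclause⟩ := t_mem_slotSet.1 ht
    exact ⟨b, hclause ▸ hS⟩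

lemma exists_polarity_forall_slotSet_mem (hD : D ⊆ G.sets)
    (hcover : IsExactCoverExempt G.elements G.exempt D) (i : Fin n) :
    ∃ b, ∀ c ∈ G.slots i, G.slotSet i b (G.clause i b c) ∈ D := by
  obtain ⟨b₀, hb₀⟩ := G.exists_polarity_clause_eq i
  by_cases h : ∃ c ∈ G.slots i, G.slotSet i b₀ (G.clause i b₀ c) ∈ D
  · obtain ⟨c, hc, hmem⟩ := h
    exact ⟨b₀, fun c' hc' => hb₀ c hc c' hc' ▸ hmem⟩
  · refine ⟨!b₀, fun c hc => ?_⟩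
    obtain ⟨b, hb⟩ := exists_slotSet_mem hD hcover hc
    have hne : b ≠ b₀ := fun hbb₀ => h ⟨c, hc, hbb₀ ▸ hb⟩
    rwa [← Bool.eq_not.2 hne]

lemma clauseSet_notMem_of_forall_slotSet_mem (hcover : IsExactCoverExempt G.elements G.exempt D)
    (hslot : ∀ c ∈ G.slots i, G.slotSet i b (G.clause i b c) ∈ D) (hocc : G.Occurs i b j) :
    clauseSet i b j ∉ D := by
  intro hclause
  obtain ⟨c, hc, rfl⟩ := id hocc
  exact clauseSet_ne_slotSet <| hcover.2 _ ⟨i, b, _, hocc, rfl⟩ _ hclause _ (hslot c hc)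
    (lit_mem_clauseSet.2 ⟨rfl, rfl, rfl⟩) (lit_mem_slotSet.2 ⟨rfl, rfl, rfl⟩)

lemma exists_assignment_of_isExactCoverExempt (hD : D ⊆ G.sets)
    (hcover : IsExactCoverExempt G.elements G.exempt D) :
    ∃ σ : Fin n → Bool, ∀ j, ∃ i, G.Occurs i (σ i) j := by
  choose falsePolarity hfalse using exists_polarity_forall_slotSet_mem hD hcover
  refine ⟨fun i => !falsePolarity i, fun j => ?_⟩
  obtain ⟨i, b, hocc, hclause⟩ := exists_clauseSet_mem hD hcover j
  have hne : b ≠ falsePolarity i := by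
    rintro rfl
    exact clauseSet_notMem_of_forall_slotSet_mem hcover (hfalse i) hocc hclause
  obtain rfl : b = !falsePolarity i := Bool.eq_not.2 hne
  exact ⟨i, hocc⟩

end AssignmentOfCover

end VariableGadgets

theorem stmt_10_general {n m : ℕ} (G : VariableGadgets n m) :
    (∃ σ : Fin n → Bool, ∀ j, ∃ i, G.Occurs i (σ i) j) ↔
    ∃ D ⊆ G.sets, IsExactCoverExempt G.elements G.exempt D := by
  constructor
  · rintro ⟨σ, hσ⟩
    choose w hw using hσ
    exact ⟨_, VariableGadgets.inducedCover_subset_sets hw,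
      VariableGadgets.isExactCoverExempt_inducedCover⟩
  · rintro ⟨D, hD, hcover⟩
    exact VariableGadgets.exists_assignment_of_isExactCoverExempt hD hcover

section Classes

variable {n m : ℕ} (cls : Fin n → XCClass) (j₁ j₂ j₃ : Fin n → Fin m)

/-- The variable gadgets of the construction for the classes `V⁺`, `V⁻`, `V*`. The slots `false` and
`true` stand for `t_i[1]` and `t_i[2]`; the values of `clause` at the slot `true` of a variable in
`V*` are irrelevant. -/
def classGadgets : VariableGadgets n m where
  slots i := {c | c = false ∨ cls i ≠ XCClass.star}
  clause i b c :=
    match cls i with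
    | .plus => if b then (if c then j₂ i else j₁ i) else j₃ i
    | .minus => if b then j₃ i else (if c then j₂ i else j₁ i)
    | .star => if b then j₁ i else j₂ i
  exists_polarity_clause_eq i := by
    rcases cls i with _ | _ | _
    · exact ⟨false, fun _ _ _ _ => rfl⟩
    · exact ⟨true, fun _ _ _ _ => rfl⟩
    · exact ⟨true, fun _ _ _ _ => rfl⟩

variable {cls j₁ j₂ j₃} {i : Fin n}

section Occurrences

lemma setOf_classGadgets_occurs_of_plus (h : cls i = XCClass.plus) :
    {j | (classGadgets cls j₁ j₂ j₃).Occurs i true j} = {j₁ i, j₂ i} ∧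
      {j | (classGadgets cls j₁ j₂ j₃).Occurs i false j} = {j₃ i} := by
  constructor <;> ext j <;> simp [VariableGadgets.Occurs, classGadgets, h, eq_comm (a := j)]

lemma setOf_classGadgets_occurs_of_minus (h : cls i = XCClass.minus) :
    {j | (classGadgets cls j₁ j₂ j₃).Occurs i false j} = {j₁ i, j₂ i} ∧
      {j | (classGadgets cls j₁ j₂ j₃).Occurs i true j} = {j₃ i} := by
  constructor <;> ext j <;> simp [VariableGadgets.Occurs, classGadgets, h, eq_comm (a := j)]

lemma setOf_classGadgets_occurs_of_star (h : cls i = XCClass.star) :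
    {j | (classGadgets cls j₁ j₂ j₃).Occurs i true j} = {j₁ i} ∧
      {j | (classGadgets cls j₁ j₂ j₃).Occurs i false j} = {j₂ i} := by
  constructor <;> ext j <;> simp [VariableGadgets.Occurs, classGadgets, h, eq_comm (a := j)]

lemma occursIn_eq_classGadgets_occurs {ltr : Fin m → Bool → Fin n × Bool}
    (hplus : ∀ i, cls i = XCClass.plus →
      {j | OccursIn ltr i true j} = {j₁ i, j₂ i} ∧ {j | OccursIn ltr i false j} = {j₃ i})
    (hminus : ∀ i, cls i = XCClass.minus →
      {j | OccursIn ltr i false j} = {j₁ i, j₂ i} ∧ {j | OccursIn ltr i true j} = {j₃ i})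
    (hstar : ∀ i, cls i = XCClass.star →
      {j | OccursIn ltr i true j} = {j₁ i} ∧ {j | OccursIn ltr i false j} = {j₂ i}) :
    OccursIn ltr = (classGadgets cls j₁ j₂ j₃).Occurs := by
  suffices h : ∀ i b,
      {j | OccursIn ltr i b j} = {j | (classGadgets cls j₁ j₂ j₃).Occurs i b j} by
    funext i b j
    exact propext (Set.ext_iff.1 (h i b) j)
  rintro i (_ | _) <;> rcases h : cls i with _ | _ | _
  · exact (hplus i h).2.trans (setOf_classGadgets_occurs_of_plus h).2.symm
  · exact (hminus i h).1.trans (setOf_classGadgets_occurs_of_minus h).1.symm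
  · exact (hstar i h).2.trans (setOf_classGadgets_occurs_of_star h).2.symm
  · exact (hplus i h).1.trans (setOf_classGadgets_occurs_of_plus h).1.symm
  · exact (hminus i h).2.trans (setOf_classGadgets_occurs_of_minus h).2.symm
  · exact (hstar i h).1.trans (setOf_classGadgets_occurs_of_star h).1.symm

end Occurrences

section SlotSets

lemma classGadgets_slotSets_of_plus (h : cls i = XCClass.plus) (hne : j₁ i ≠ j₂ i) :
    (classGadgets cls j₁ j₂ j₃).slotSets i =
      {{XCElem.lit i true (j₁ i), XCElem.t i false},
       {XCElem.lit i true (j₂ i), XCElem.t i true},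
       {XCElem.lit i false (j₃ i), XCElem.t i false, XCElem.t i true}} := by
  ext S
  simp [VariableGadgets.slotSets, VariableGadgets.slotSet, classGadgets, h, hne, hne.symm,
    Set.image_pair, or_comm, or_assoc]

lemma classGadgets_slotSets_of_minus (h : cls i = XCClass.minus) (hne : j₁ i ≠ j₂ i) :
    (classGadgets cls j₁ j₂ j₃).slotSets i =
      {{XCElem.lit i false (j₁ i), XCElem.t i false},
       {XCElem.lit i false (j₂ i), XCElem.t i true},
       {XCElem.lit i true (j₃ i), XCElem.t i false, XCElem.t i true}} := by
  ext S
  simp [VariableGadgets.slotSets, VariableGadgets.slotSet, classGadgets, h, hne, hne.symm,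
    Set.image_pair, or_assoc]

lemma classGadgets_slotSets_of_star (h : cls i = XCClass.star) :
    (classGadgets cls j₁ j₂ j₃).slotSets i =
      {{XCElem.lit i true (j₁ i), XCElem.t i false},
       {XCElem.lit i false (j₂ i), XCElem.t i false}} := by
  ext S
  simp [VariableGadgets.slotSets, VariableGadgets.slotSet, classGadgets, h, or_comm]

end SlotSets

section Instance

variable {ltr : Fin m → Bool → Fin n × Bool}

lemma coverR_eq_exempt (hocc : OccursIn ltr = (classGadgets cls j₁ j₂ j₃).Occurs) :
    coverR ltr = (classGadgets cls j₁ j₂ j₃).exempt := by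
  rw [coverR, hocc, VariableGadgets.exempt]

lemma coverX_eq_elements (hocc : OccursIn ltr = (classGadgets cls j₁ j₂ j₃).Occurs) :
    coverX ltr cls = (classGadgets cls j₁ j₂ j₃).elements := by
  rw [coverX, hocc, VariableGadgets.elements, VariableGadgets.exempt, Set.union_assoc _ _ {e | _}]
  congr 1
  · congr 1
    ext e
    simp [eq_comm]
  · ext e
    constructor
    · rintro (⟨i, rfl⟩ | ⟨i, hi, rfl⟩)
      · exact ⟨i, false, .inl rfl, rfl⟩
      · exact ⟨i, true, .inr hi, rfl⟩
    · rintro ⟨i, _ | _, hc, rfl⟩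
      · exact .inl ⟨i, rfl⟩
      · exact .inr ⟨i, hc.resolve_left Bool.noConfusion, rfl⟩

lemma coverD_eq_sets (hocc : OccursIn ltr = (classGadgets cls j₁ j₂ j₃).Occurs)
    (hplus : ∀ i, cls i = XCClass.plus → j₁ i ≠ j₂ i)
    (hminus : ∀ i, cls i = XCClass.minus → j₁ i ≠ j₂ i) :
    coverD ltr cls j₁ j₂ j₃ = (classGadgets cls j₁ j₂ j₃).sets := by
  rw [coverD, hocc, VariableGadgets.sets, Set.union_assoc, Set.union_assoc]
  congr 1
  ext S
  constructor
  · rintro (⟨i, h, hS⟩ | ⟨i, h, hS⟩ | ⟨i, h, hS⟩) <;> refine ⟨i, ?_⟩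
    · rwa [classGadgets_slotSets_of_plus h (hplus i h)]
    · rwa [classGadgets_slotSets_of_minus h (hminus i h)]
    · rwa [classGadgets_slotSets_of_star h]
  · rintro ⟨i, hS⟩
    rcases h : cls i with _ | _ | _
    · rw [classGadgets_slotSets_of_plus h (hplus i h)] at hS
      exact .inl ⟨i, h, hS⟩
    · rw [classGadgets_slotSets_of_minus h (hminus i h)] at hS
      exact .inr (.inl ⟨i, h, hS⟩)
    · rw [classGadgets_slotSets_of_star h] at hS
      exact .inr (.inr ⟨i, h, hS⟩)

end Instance

end Classes

lemma exists_literal_true_iff_exists_occursIn {n m : ℕ} {ltr : Fin m → Bool → Fin n × Bool}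
    {σ : Fin n → Bool} {j : Fin m} :
    (∃ p, σ (ltr j p).1 = (ltr j p).2) ↔ ∃ i, OccursIn ltr i (σ i) j := by
  constructor
  · rintro ⟨p, hp⟩
    exact ⟨(ltr j p).1, p, by rw [hp]⟩
  · rintro ⟨i, p, hp⟩
    exact ⟨p, by rw [hp]⟩

theorem stmt_10 {n m : ℕ} (ltr : Fin m → Bool → Fin n × Bool)
    (hclean : ∀ j, (ltr j false).1 ≠ (ltr j true).1)
    (cls : Fin n → XCClass) (j₁ j₂ j₃ : Fin n → Fin m)
    (hplus : ∀ i, cls i = XCClass.plus →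
      {j | OccursIn ltr i true j} = {j₁ i, j₂ i} ∧ j₁ i ≠ j₂ i ∧
      {j | OccursIn ltr i false j} = {j₃ i})
    (hminus : ∀ i, cls i = XCClass.minus →
      {j | OccursIn ltr i false j} = {j₁ i, j₂ i} ∧ j₁ i ≠ j₂ i ∧
      {j | OccursIn ltr i true j} = {j₃ i})
    (hstar : ∀ i, cls i = XCClass.star →
      {j | OccursIn ltr i true j} = {j₁ i} ∧ {j | OccursIn ltr i false j} = {j₂ i}) :
    (∃ σ : Fin n → Bool, ∀ j, ∃ p, σ (ltr j p).1 = (ltr j p).2) ↔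
    (∃ D' ⊆ coverD ltr cls j₁ j₂ j₃,
      (∀ e ∈ coverX ltr cls, e ∉ coverR ltr → ∃! S, S ∈ D' ∧ e ∈ S) ∧
      (∀ e ∈ coverR ltr, ∀ S₁ ∈ D', ∀ S₂ ∈ D', e ∈ S₁ → e ∈ S₂ → S₁ = S₂)) := by
  have hocc : OccursIn ltr = (classGadgets cls j₁ j₂ j₃).Occurs :=
    occursIn_eq_classGadgets_occurs (fun i h => ⟨(hplus i h).1, (hplus i h).2.2⟩)
      (fun i h => ⟨(hminus i h).1, (hminus i h).2.2⟩) hstar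
  have hD : coverD ltr cls j₁ j₂ j₃ = (classGadgets cls j₁ j₂ j₃).sets :=
    coverD_eq_sets hocc (fun i h => (hplus i h).2.1) (fun i h => (hminus i h).2.1)
  simp only [exists_literal_true_iff_exists_occursIn]
  rw [coverX_eq_elements hocc, coverR_eq_exempt hocc, hD, hocc]
  exact stmt_10_general (classGadgets cls j₁ j₂ j₃)
end

section
/- Let X be a finite set, let M ⊆ X × X, and let M' ⊆ M be a perfect matching over X × X. Let u, v ∈ X be distinct and suppose u is linked to v in M'. Then, in the directed graph with vertex set X and edge set {(a,b) ∈ M : a ≠ b}, there exists a directed walk from u to v and a directed walk from v to u. -/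
/-- Two pairs agree if they share the first coordinate or the second coordinate. -/
def Agrees {X : Type*} (p q : X × X) : Prop := p.1 = q.1 ∨ p.2 = q.2

/-- A matching over `X × X`: no two distinct elements agree. -/
def IsMatching {X : Type*} (M : Set (X × X)) : Prop :=
  ∀ p ∈ M, ∀ q ∈ M, p ≠ q → ¬ Agrees p q

/-- A perfect matching over `X × X`: a matching in which every element of `X` occurs as a
first coordinate and as a second coordinate. -/
def IsPerfectMatching {X : Type*} (M : Set (X × X)) : Prop :=
  IsMatching M ∧ (∀ u : X, ∃ v, (u, v) ∈ M) ∧ (∀ v : X, ∃ u, (u, v) ∈ M)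

/-- `u` is linked to `v` in `M`: there exist an odd number `t ≥ 1` and elements
`z 1, …, z t` with `(u, z 1) ∈ M`, `(z t, v) ∈ M`, and `(z i, z (i+1)) ∈ M` for
every `i ∈ [t−1]`. -/
def Linked {X : Type*} (M : Set (X × X)) (u v : X) : Prop :=
  ∃ t : ℕ, Odd t ∧ ∃ z : ℕ → X,
    (u, z 1) ∈ M ∧ (z t, v) ∈ M ∧ ∀ i, 1 ≤ i → i < t → (z i, z (i + 1)) ∈ M

/-!
A perfect matching is the graph of a permutation `σ`, so a walk along it from `u` to `v` puts both on
one cycle of `σ`. As `X` is finite, that cycle closes up and continuing along it leads back from `v`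
to `u`. Deleting the loops from a walk does not change its endpoints.
-/

open Relation

section

variable {X : Type*}

theorem reflTransGen_and_ne (r : X → X → Prop) :
    ReflTransGen (fun a b => r a b ∧ a ≠ b) = ReflTransGen r := by
  refine le_antisymm (ReflTransGen.mono fun _ _ h => h.1) (reflTransGen_closed fun a b hab => ?_)
  obtain rfl | hne := eq_or_ne a b
  · exact .refl
  · exact .single ⟨hab, hne⟩

theorem reflTransGen_perm_apply_pow (σ : Equiv.Perm X) (n : ℕ) (a : X) :
    ReflTransGen (fun a b => σ a = b) a ((σ ^ n) a) := by
  induction n with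
  | zero => exact .refl
  | succ n ih => exact ih.tail (by rw [pow_succ', Equiv.Perm.mul_apply])

theorem reflTransGen_perm_apply_iff_sameCycle [Finite X] (σ : Equiv.Perm X) {a b : X} :
    ReflTransGen (fun a b => σ a = b) a b ↔ σ.SameCycle a b := by
  constructor
  · refine reflTransGen_le_of_equivalence_of_le (Equiv.Perm.SameCycle.equivalence σ) ?_ a b
    rintro c _ rfl
    exact Equiv.Perm.SameCycle.rfl.apply_right
  · intro hab
    obtain ⟨n, rfl⟩ := hab.exists_nat_pow_eq
    exact reflTransGen_perm_apply_pow σ n a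

variable {M : Set (X × X)}

theorem IsMatching.snd_eq (hM : IsMatching M) {a b c : X} (hab : (a, b) ∈ M)
    (hac : (a, c) ∈ M) : b = c := by
  by_contra hne
  exact hM _ hab _ hac (fun heq => hne (congrArg Prod.snd heq)) (.inl rfl)

theorem IsMatching.fst_eq (hM : IsMatching M) {a b c : X} (hac : (a, c) ∈ M)
    (hbc : (b, c) ∈ M) : a = b := by
  by_contra hne
  exact hM _ hac _ hbc (fun heq => hne (congrArg Prod.fst heq)) (.inr rfl)

theorem IsPerfectMatching.exists_perm (hM : IsPerfectMatching M) :
    ∃ σ : Equiv.Perm X, ∀ a b, (a, b) ∈ M ↔ σ a = b := by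
  obtain ⟨hmatch, hfst, hsnd⟩ := hM
  choose f hf using hfst
  have mem_iff (a b : X) : (a, b) ∈ M ↔ f a = b :=
    ⟨hmatch.snd_eq (hf a), fun hab => hab ▸ hf a⟩
  have f_injective : Function.Injective f := fun a b hab =>
    hmatch.fst_eq (hf a) (hab ▸ hf b)
  have f_surjective : Function.Surjective f := fun b =>
    (hsnd b).imp fun a => (mem_iff a b).1
  exact ⟨.ofBijective f ⟨f_injective, f_surjective⟩, mem_iff⟩

theorem IsPerfectMatching.reflTransGen_symm [Finite X] (hM : IsPerfectMatching M) {u v : X}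
    (huv : ReflTransGen (fun a b => (a, b) ∈ M) u v) :
    ReflTransGen (fun a b => (a, b) ∈ M) v u := by
  obtain ⟨σ, hσ⟩ := hM.exists_perm
  simp only [hσ, reflTransGen_perm_apply_iff_sameCycle] at huv ⊢
  exact huv.symm

theorem Linked.reflTransGen {u v : X} (h : Linked M u v) :
    ReflTransGen (fun a b => (a, b) ∈ M) u v := by
  obtain ⟨t, ht, z, hu, hv, hz⟩ := h
  have index_walk : ReflTransGen (fun i j => (z i, z j) ∈ M) 1 t :=
    reflTransGen_of_succ_of_le _ (fun i hi => hz i hi.1 hi.2) ht.pos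
  have inner_walk : ReflTransGen (fun a b => (a, b) ∈ M) (z 1) (z t) :=
    ReflTransGen.lift z (fun _ _ hij => hij) 1 t index_walk
  exact (inner_walk.head hu).tail hv

end

theorem stmt_15_general {X : Type*} [Finite X] {M M' : Set (X × X)} (hsub : M' ⊆ M)
    (hM' : IsPerfectMatching M') {u v : X} (h : ReflTransGen (fun a b => (a, b) ∈ M') u v) :
    ReflTransGen (fun a b : X => (a, b) ∈ M ∧ a ≠ b) u v ∧
    ReflTransGen (fun a b : X => (a, b) ∈ M ∧ a ≠ b) v u := by
  rw [reflTransGen_and_ne]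
  have walk_mono := ReflTransGen.mono (fun a b (hab : (a, b) ∈ M') => hsub hab)
  exact ⟨walk_mono _ _ h, walk_mono _ _ (hM'.reflTransGen_symm h)⟩

theorem stmt_15 {X : Type*} [Finite X] (M M' : Set (X × X)) (hsub : M' ⊆ M)
    (hM' : IsPerfectMatching M') (u v : X) (huv : u ≠ v) (h : Linked M' u v) :
    Relation.ReflTransGen (fun a b : X => (a, b) ∈ M ∧ a ≠ b) u v ∧
    Relation.ReflTransGen (fun a b : X => (a, b) ∈ M ∧ a ≠ b) v u :=
  stmt_15_general hsub hM' h.reflTransGen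
end
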